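/- (Tensorization of transport-entropy inequalities) Let 𝒳₁, 𝒳₂ be Polish spaces with lower semicontinuous cost functions c₁ on 𝒳₁×𝒳₁ and c₂ on 𝒳₂×𝒳₂, let α₁, α₂ ∈ 𝒜, and suppose μ₁ ∈ P(𝒳₁), μ₂ ∈ P(𝒳₂) satisfy α₁(𝒯_{c₁}(ν₁,μ₁)) ≤ H(ν₁|μ₁) for all ν₁ ∈ P(𝒳₁) and α₂(𝒯_{c₂}(ν₂,μ₂)) ≤ H(ν₂|μ₂) for all ν₂ ∈ P(𝒳₂). Then for every ν ∈ P(𝒳₁×𝒳₂), (α₁ □ α₂)(𝒯_{c₁⊕c₂}(ν, μ₁⊗μ₂)) ≤ H(ν | μ₁⊗μ₂). -/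

import Mathlib

open MeasureTheory ENNReal

/-- The optimal transport cost `𝒯_c(ν, μ)` associated with the cost function `c`:
the infimum of `∫ c dπ` over all couplings `π` of `ν` and `μ`. -/
noncomputable def optCost {X : Type*} [MeasurableSpace X] (c : X → X → ℝ)
    (ν μ : Measure X) : ℝ≥0∞ :=
  ⨅ (π : Measure (X × X)) (_ : π.map Prod.fst = ν ∧ π.map Prod.snd = μ),
    ∫⁻ p, ENNReal.ofReal (c p.1 p.2) ∂π

open Classical in
/-- The relative entropy `H(ν|μ)`: it equals `∫ h(dν/dμ) dμ` with
`h(t) = t log t - t + 1 ≥ 0` if `ν ≪ μ`, and `+∞` otherwise.  For probability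
measures `ν ≪ μ` this coincides with `∫ log (dν/dμ) dν`. -/
noncomputable def relEntropy {X : Type*} [MeasurableSpace X] (ν μ : Measure X) : ℝ≥0∞ :=
  if ν ≪ μ then
    ∫⁻ x, ENNReal.ofReal ((ν.rnDeriv μ x).toReal * Real.log (ν.rnDeriv μ x).toReal
      - (ν.rnDeriv μ x).toReal + 1) ∂μ
  else ∞

/-- The natural extension to `ℝ≥0∞` of a function `α : [0,∞) → [0,∞)`.
For an increasing `α` and `x < ∞` it equals `ENNReal.ofReal (α x.toReal)`,
and at `x = ∞` it is the limit of `α` at `+∞` (so `∞` when `α` is unbounded). -/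
noncomputable def extRealFun (α : ℝ → ℝ) (x : ℝ≥0∞) : ℝ≥0∞ :=
  ⨆ (t : ℝ) (_ : 0 ≤ t ∧ ENNReal.ofReal t ≤ x), ENNReal.ofReal (α t)

/-- The inf-convolution `α₁ □ α₂ (t) = inf {α₁(t₁) + α₂(t₂) : t₁, t₂ ≥ 0, t₁ + t₂ = t}`. -/
noncomputable def infConv (α₁ α₂ : ℝ → ℝ) (t : ℝ) : ℝ :=
  sInf {s : ℝ | ∃ t₁ t₂ : ℝ, 0 ≤ t₁ ∧ 0 ≤ t₂ ∧ t₁ + t₂ = t ∧ s = α₁ t₁ + α₂ t₂}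

/-!
Condition on the first coordinate. The chain rule splits `H(ν | μ₁ ⊗ μ₂)` into `H(ν₁ | μ₁)` and the
mean entropy of the conditional laws of the second coordinate, while gluing near-optimal couplings
of the first marginals and of the conditional laws bounds the cost of `ν` by the cost of `ν₁` plus
the mean conditional cost. The two inequalities are then combined by Jensen's inequality for `α₂`
and the definition of `α₁ □ α₂`.

To choose the conditional couplings measurably, condition on the cell of a countable partition of
the first space instead of on the point. By data processing this only lowers the entropy, and it
replaces `ν` by a measure which converges weakly to `ν` as the mesh goes to zero; lower
semicontinuity of the optimal cost under weak convergence carries the bound back to `ν`.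
-/

open ProbabilityTheory InformationTheory Filter Topology
open scoped BoundedContinuousFunction NNReal

section Convexity

variable {α β α₁ α₂ : ℝ → ℝ}

lemma ofReal_le_extRealFun {t : ℝ} {x : ℝ≥0∞} (ht : 0 ≤ t) (htx : ENNReal.ofReal t ≤ x) :
    ENNReal.ofReal (α t) ≤ extRealFun α x :=
  le_iSup₂_of_le (f := fun (t : ℝ) (_ : 0 ≤ t ∧ ENNReal.ofReal t ≤ x) => ENNReal.ofReal (α t))
    t ⟨ht, htx⟩ le_rfl

lemma extRealFun_mono (α : ℝ → ℝ) : Monotone (extRealFun α) := fun _ _ hxy =>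
  iSup₂_le fun _ ht => ofReal_le_extRealFun ht.1 (ht.2.trans hxy)

lemma extRealFun_le_of_forall_lt (hβ : ConvexOn ℝ (Set.Ici 0) β) (hβ_zero : β 0 ≤ 0)
    {x H : ℝ≥0∞} (h : ∀ M < x, extRealFun β M ≤ H) : extRealFun β x ≤ H := by
  refine iSup₂_le fun t ⟨ht, htx⟩ => ?_
  obtain rfl | ht := ht.eq_or_lt
  · simp [ENNReal.ofReal_of_nonpos hβ_zero]
  have hcont : ContinuousAt β t := hβ.continuousOn_interior.continuousAt
    (isOpen_interior.mem_nhds (by rwa [interior_Ici, Set.mem_Ioi]))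
  have hlim : Tendsto (fun u => ENNReal.ofReal (β u)) (𝓝[<] t) (𝓝 (ENNReal.ofReal (β t))) :=
    (ENNReal.continuous_ofReal.continuousAt.comp hcont).tendsto.mono_left nhdsWithin_le_nhds
  refine le_of_tendsto hlim ?_
  filter_upwards [Ioo_mem_nhdsLT ht] with u hu
  exact (ofReal_le_extRealFun hu.1.le le_rfl).trans
    (h _ (((ENNReal.ofReal_lt_ofReal_iff ht).2 hu.2).trans_le htx))

lemma infConv_le_add (hα₁ : ∀ t, 0 ≤ t → 0 ≤ α₁ t) (hα₂ : ∀ t, 0 ≤ t → 0 ≤ α₂ t)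
    {s t : ℝ} (hs : 0 ≤ s) (ht : 0 ≤ t) : infConv α₁ α₂ (s + t) ≤ α₁ s + α₂ t := by
  refine csInf_le ⟨0, ?_⟩ ⟨s, t, hs, ht, rfl, rfl⟩
  rintro _ ⟨a, b, ha, hb, -, rfl⟩
  exact add_nonneg (hα₁ a ha) (hα₂ b hb)

lemma exists_add_lt_of_infConv_lt {t a : ℝ} (ht : 0 ≤ t) (h : infConv α₁ α₂ t < a) :
    ∃ t₁ t₂, 0 ≤ t₁ ∧ 0 ≤ t₂ ∧ t₁ + t₂ = t ∧ α₁ t₁ + α₂ t₂ < a := by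
  obtain ⟨_, ⟨t₁, t₂, ht₁, ht₂, hsum, rfl⟩, hlt⟩ :=
    exists_lt_of_csInf_lt (by exact ⟨_, t, 0, ht, le_rfl, add_zero t, rfl⟩) h
  exact ⟨t₁, t₂, ht₁, ht₂, hsum, hlt⟩

lemma convexOn_infConv (hα₁ : ConvexOn ℝ (Set.Ici 0) α₁) (hα₂ : ConvexOn ℝ (Set.Ici 0) α₂)
    (hα₁_nonneg : ∀ t, 0 ≤ t → 0 ≤ α₁ t) (hα₂_nonneg : ∀ t, 0 ≤ t → 0 ≤ α₂ t) :
    ConvexOn ℝ (Set.Ici 0) (infConv α₁ α₂) := by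
  refine ⟨convex_Ici 0, fun x hx y hy a b ha hb hab => le_of_forall_pos_le_add fun ε hε => ?_⟩
  obtain ⟨x₁, x₂, hx₁, hx₂, rfl, hxε⟩ :=
    exists_add_lt_of_infConv_lt hx (lt_add_of_pos_right (infConv α₁ α₂ x) hε)
  obtain ⟨y₁, y₂, hy₁, hy₂, rfl, hyε⟩ :=
    exists_add_lt_of_infConv_lt hy (lt_add_of_pos_right (infConv α₁ α₂ y) hε)
  have hconv₁ := hα₁.2 hx₁ hy₁ ha hb hab
  have hconv₂ := hα₂.2 hx₂ hy₂ ha hb hab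
  have hsplit := infConv_le_add hα₁_nonneg hα₂_nonneg
    (hα₁.1 hx₁ hy₁ ha hb hab) (hα₂.1 hx₂ hy₂ ha hb hab)
  simp only [smul_eq_mul] at hconv₁ hconv₂ hsplit ⊢
  calc infConv α₁ α₂ (a * (x₁ + x₂) + b * (y₁ + y₂))
      = infConv α₁ α₂ ((a * x₁ + b * y₁) + (a * x₂ + b * y₂)) := by ring_nf
    _ ≤ a * (α₁ x₁ + α₂ x₂) + b * (α₁ y₁ + α₂ y₂) := by linarith
    _ ≤ a * (infConv α₁ α₂ (x₁ + x₂) + ε) + b * (infConv α₁ α₂ (y₁ + y₂) + ε) := by gcongr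
    _ = _ := by linear_combination ε * hab

lemma extRealFun_infConv_add_le (hα₁ : ∀ t, 0 ≤ t → 0 ≤ α₁ t) (hα₂ : ∀ t, 0 ≤ t → 0 ≤ α₂ t)
    (x y : ℝ≥0∞) :
    extRealFun (infConv α₁ α₂) (x + y) ≤ extRealFun α₁ x + extRealFun α₂ y := by
  refine iSup₂_le fun t ⟨ht, htxy⟩ => ?_
  obtain ⟨u, v, hu, hv, rfl, hux, hvy⟩ : ∃ u v : ℝ, 0 ≤ u ∧ 0 ≤ v ∧ u + v = t ∧
      ENNReal.ofReal u ≤ x ∧ ENNReal.ofReal v ≤ y := by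
    rcases le_total (ENNReal.ofReal t) x with htx | hxt
    · exact ⟨t, 0, ht, le_rfl, add_zero t, htx, by simp⟩
    · have hx : x ≠ ∞ := ne_top_of_le_ne_top ENNReal.ofReal_ne_top hxt
      refine ⟨x.toReal, t - x.toReal, ENNReal.toReal_nonneg,
        sub_nonneg.2 (ENNReal.toReal_le_of_le_ofReal ht hxt), add_sub_cancel _ _,
        ENNReal.ofReal_toReal_le, ?_⟩
      rw [ENNReal.ofReal_sub _ ENNReal.toReal_nonneg, ENNReal.ofReal_toReal hx]
      exact tsub_le_iff_left.2 htxy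
  calc ENNReal.ofReal (infConv α₁ α₂ (u + v))
      ≤ ENNReal.ofReal (α₁ u + α₂ v) := ENNReal.ofReal_le_ofReal (infConv_le_add hα₁ hα₂ hu hv)
    _ ≤ ENNReal.ofReal (α₁ u) + ENNReal.ofReal (α₂ v) := ENNReal.ofReal_add_le
    _ ≤ extRealFun α₁ x + extRealFun α₂ y :=
        add_le_add (ofReal_le_extRealFun hu hux) (ofReal_le_extRealFun hv hvy)

lemma exists_affine_le_of_convexOn {S : Set ℝ} {f : ℝ → ℝ} (hf : ConvexOn ℝ S f) {x : ℝ}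
    (hx : x ∈ interior S) : ∃ p, ∀ y ∈ S, f x + p * (y - x) ≤ f y := by
  refine ⟨derivWithin f (Set.Ioi x) x, fun y hy => ?_⟩
  rcases lt_trichotomy y x with hyx | rfl | hxy
  · have hslope := (hf.slope_le_leftDeriv_of_mem_interior hy hx hyx).trans
      (hf.leftDeriv_le_rightDeriv_of_mem_interior hx)
    rw [slope_def_field, div_le_iff₀ (sub_pos.2 hyx)] at hslope
    linarith
  · simp
  · have hslope := hf.rightDeriv_le_slope_of_mem_interior hx hy hxy
    rw [slope_def_field, le_div_iff₀ (sub_pos.2 hxy)] at hslope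
    linarith

lemma exists_mul_add_le_extRealFun_add (hα : ConvexOn ℝ (Set.Ici 0) α)
    (hα_mono : MonotoneOn α (Set.Ici 0)) {r : ℝ} (hr : 0 < r) (hαr : 0 ≤ α r) :
    ∃ p : ℝ≥0, ∀ y : ℝ≥0∞,
      p * y + ENNReal.ofReal (α r) ≤ extRealFun α y + p * ENNReal.ofReal r := by
  obtain ⟨p, hp⟩ := exists_affine_le_of_convexOn hα (x := r) (by rwa [interior_Ici, Set.mem_Ioi])
  have hp_nonneg : 0 ≤ p := by
    have := (hp 0 Set.self_mem_Ici).trans (hα_mono Set.self_mem_Ici hr.le hr.le)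
    nlinarith
  lift p to ℝ≥0 using hp_nonneg
  have hline (t : ℝ≥0) : p * t + ENNReal.ofReal (α r) ≤
      extRealFun α t + p * ENNReal.ofReal r := by
    calc p * t + ENNReal.ofReal (α r) = ENNReal.ofReal (p * t + α r) := by
          rw [ENNReal.ofReal_add (by positivity) hαr, ENNReal.ofReal_mul p.coe_nonneg,
            ENNReal.ofReal_coe_nnreal, ENNReal.ofReal_coe_nnreal]
      _ ≤ ENNReal.ofReal (α t + p * r) := ENNReal.ofReal_le_ofReal (by linarith [hp t t.2])
      _ ≤ ENNReal.ofReal (α t) + ENNReal.ofReal (p * r) := ENNReal.ofReal_add_le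
      _ ≤ extRealFun α t + p * ENNReal.ofReal r := by
          rw [ENNReal.ofReal_mul p.coe_nonneg, ENNReal.ofReal_coe_nnreal]
          gcongr
          exact ofReal_le_extRealFun t.2 ENNReal.ofReal_coe_nnreal.le
  refine ⟨p, fun y => ?_⟩
  induction y using ENNReal.recTopCoe with
  | coe t => exact hline t
  | top =>
    have hlim : Tendsto (fun n : ℕ => p * (n : ℝ≥0∞) + ENNReal.ofReal (α r)) atTop
        (𝓝 (p * ∞ + ENNReal.ofReal (α r))) :=
      (ENNReal.Tendsto.const_mul ENNReal.tendsto_nat_nhds_top (.inl ENNReal.top_ne_zero)).add_const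
        _
    refine le_of_tendsto' hlim fun n => (hline n).trans ?_
    gcongr
    exact extRealFun_mono α le_top

lemma extRealFun_lintegral_le {ι : Type*} [MeasurableSpace ι] (m : Measure ι)
    [IsProbabilityMeasure m] (hα : ConvexOn ℝ (Set.Ici 0) α)
    (hα_mono : MonotoneOn α (Set.Ici 0)) (τ : ι → ℝ≥0∞) :
    extRealFun α (∫⁻ i, τ i ∂m) ≤ ∫⁻ i, extRealFun α (τ i) ∂m := by
  refine iSup₂_le fun r ⟨hr, hrτ⟩ => ?_
  rcases le_total (α r) 0 with hαr | hαr
  · simp [ENNReal.ofReal_of_nonpos hαr]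
  obtain rfl | hr := hr.eq_or_lt
  · calc ENNReal.ofReal (α 0) = ∫⁻ _, ENNReal.ofReal (α 0) ∂m := by simp
      _ ≤ _ := lintegral_mono fun i => ofReal_le_extRealFun le_rfl (by simp)
  obtain ⟨p, hp⟩ := exists_mul_add_le_extRealFun_add hα hα_mono hr hαr
  refine ENNReal.le_of_add_le_add_right (a := p * ENNReal.ofReal r) (by finiteness) ?_
  calc ENNReal.ofReal (α r) + p * ENNReal.ofReal r
      ≤ p * ∫⁻ i, τ i ∂m + ENNReal.ofReal (α r) := by rw [add_comm]; gcongr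
    _ = ∫⁻ i, p * τ i + ENNReal.ofReal (α r) ∂m := by
        rw [lintegral_add_right _ measurable_const, lintegral_const_mul' _ _ (by finiteness)]
        simp
    _ ≤ ∫⁻ i, extRealFun α (τ i) + p * ENNReal.ofReal r ∂m := lintegral_mono fun i => hp (τ i)
    _ = (∫⁻ i, extRealFun α (τ i) ∂m) + p * ENNReal.ofReal r := by
        rw [lintegral_add_right _ measurable_const]
        simp

end Convexity

section Entropy

variable {X Y : Type*} [MeasurableSpace X] [MeasurableSpace Y]

lemma relEntropy_eq_klDiv (ν μ : Measure X) [IsFiniteMeasure ν] [IsFiniteMeasure μ] :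
    relEntropy ν μ = klDiv ν μ := by
  classical
  rw [relEntropy, klDiv_eq_lintegral_klFun]
  simp only [klFun_apply, sub_add_eq_add_sub]

lemma klDiv_prod_eq_add [StandardBorelSpace Y] [Nonempty Y] (ν : Measure (X × Y))
    [IsFiniteMeasure ν] (μ₁ : Measure X) [IsFiniteMeasure μ₁] (μ₂ : Measure Y)
    [IsProbabilityMeasure μ₂] :
    klDiv ν (μ₁.prod μ₂) = klDiv ν.fst μ₁ + klDiv ν (ν.fst.prod μ₂) := by
  have := klDiv_compProd_eq_add ν.fst μ₁ ν.condKernel (Kernel.const X μ₂)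
  rwa [ν.disintegrate, Measure.compProd_const, Measure.compProd_const] at this

variable [MeasurableSpace.CountableOrCountablyGenerated X Y]

lemma rnDeriv_compProd_eq_kernel_rnDeriv (m : Measure X) [IsFiniteMeasure m] {κ η : Kernel X Y}
    [IsFiniteKernel κ] [IsFiniteKernel η] (h : ∀ᵐ x ∂m, κ x ≪ η x) :
    (m ⊗ₘ κ).rnDeriv (m ⊗ₘ η) =ᵐ[m ⊗ₘ η] fun p => κ.rnDeriv η p.1 p.2 := by
  have hκ : κ =ᵐ[m] η.withDensity (κ.rnDeriv η) := by
    filter_upwards [h] with x hx using (Kernel.withDensity_rnDeriv_eq hx).symm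
  rw [Measure.compProd_congr hκ, Measure.compProd_withDensity (κ.measurable_rnDeriv η)]
  exact Measure.rnDeriv_withDensity _ (κ.measurable_rnDeriv η)

lemma lintegral_klDiv_kernel (m : Measure X) [IsFiniteMeasure m] (κ η : Kernel X Y)
    [IsFiniteKernel κ] [IsFiniteKernel η] :
    ∫⁻ x, klDiv (κ x) (η x) ∂m = klDiv (m ⊗ₘ κ) (m ⊗ₘ η) := by
  by_cases h : ∀ᵐ x ∂m, κ x ≪ η x
  · rw [klDiv_eq_lintegral_klFun_of_ac (Measure.absolutelyContinuous_compProd_right_iff.2 h)]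
    calc ∫⁻ x, klDiv (κ x) (η x) ∂m
        = ∫⁻ x, ∫⁻ y, ENNReal.ofReal (klFun (κ.rnDeriv η x y).toReal) ∂η x ∂m := by
          refine lintegral_congr_ae ?_
          filter_upwards [h] with x hx
          rw [klDiv_eq_lintegral_klFun_of_ac hx]
          refine lintegral_congr_ae ?_
          filter_upwards [κ.rnDeriv_eq_rnDeriv_measure (η := η) (a := x)] with y hy
          rw [hy]
      _ = ∫⁻ p, ENNReal.ofReal (klFun (κ.rnDeriv η p.1 p.2).toReal) ∂(m ⊗ₘ η) :=
          by rw [Measure.lintegral_compProd (by fun_prop)]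
      _ = _ := by
          refine lintegral_congr_ae ?_
          filter_upwards [rnDeriv_compProd_eq_kernel_rnDeriv m h] with p hp
          rw [hp]
  · rw [klDiv_of_not_ac (mt Measure.absolutelyContinuous_compProd_right_iff.1 h), eq_top_iff]
    calc ∞ = ∫⁻ _ in {x | κ x ≪ η x}ᶜ, ∞ ∂m := by
          simp [ENNReal.top_mul (show m {x | κ x ≪ η x}ᶜ ≠ 0 from h)]
      _ = ∫⁻ x in {x | κ x ≪ η x}ᶜ, klDiv (κ x) (η x) ∂m :=
          setLIntegral_congr_fun (Kernel.measurableSet_absolutelyContinuous κ η).compl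
            fun _ hx => (klDiv_of_not_ac hx).symm
      _ ≤ ∫⁻ x, klDiv (κ x) (η x) ∂m := setLIntegral_le_lintegral _ _

end Entropy

section CompProd

variable {X X' Y Y' : Type*} [MeasurableSpace X] [MeasurableSpace X'] [MeasurableSpace Y]
  [MeasurableSpace Y']

lemma map_prodMap_compProd (m : Measure X) [SFinite m] (K : Kernel X Y) [IsSFiniteKernel K]
    {f : X → X'} (hf : Measurable f) {g : Y → Y'} (hg : Measurable g) (κ : Kernel X' Y')
    [IsSFiniteKernel κ] (h : ∀ x, (K x).map g = κ (f x)) :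
    (m ⊗ₘ K).map (Prod.map f g) = m.map f ⊗ₘ κ := by
  refine Measure.ext_of_lintegral _ fun F hF => ?_
  have hfg := hf.prodMap hg
  calc ∫⁻ p, F p ∂(m ⊗ₘ K).map (Prod.map f g)
      = ∫⁻ x, ∫⁻ y, F (f x, g y) ∂K x ∂m := by
        rw [lintegral_map hF hfg]
        exact Measure.lintegral_compProd (hF.comp hfg)
    _ = ∫⁻ x, ∫⁻ y', F (f x, y') ∂κ (f x) ∂m := by
        refine lintegral_congr fun x => ?_
        rw [← h x, lintegral_map (by fun_prop) hg]
    _ = ∫⁻ p, F p ∂(m.map f ⊗ₘ κ) := by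
        rw [Measure.lintegral_compProd hF, lintegral_map hF.lintegral_kernel_prod_right' hf]

end CompProd

section Coupling

variable {X Y : Type*} [MeasurableSpace X] [MeasurableSpace Y]

/-- `π` is a coupling of `ν` and `μ`, i.e. its marginals are `ν` and `μ`. The infimum defining
`optCost c ν μ` runs over these measures. -/
structure IsCoupling (π : Measure (X × Y)) (ν : Measure X) (μ : Measure Y) : Prop where
  map_fst : π.map Prod.fst = ν
  map_snd : π.map Prod.snd = μ

lemma IsCoupling.isProbabilityMeasure {π : Measure (X × Y)} {ν : Measure X} {μ : Measure Y}
    [IsProbabilityMeasure ν] (h : IsCoupling π ν μ) : IsProbabilityMeasure π := by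
  have : IsProbabilityMeasure (π.map Prod.fst) := by rwa [h.map_fst]
  exact Measure.isProbabilityMeasure_of_map Prod.fst

lemma isCoupling_prod (ν : Measure X) (μ : Measure Y) [IsProbabilityMeasure ν]
    [IsProbabilityMeasure μ] : IsCoupling (ν.prod μ) ν μ :=
  ⟨Measure.fst_prod, Measure.snd_prod⟩

lemma optCost_le_lintegral {c : X → X → ℝ} {π : Measure (X × X)} {ν μ : Measure X}
    (h : IsCoupling π ν μ) : optCost c ν μ ≤ ∫⁻ p, ENNReal.ofReal (c p.1 p.2) ∂π :=
  iInf₂_le π ⟨h.map_fst, h.map_snd⟩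

lemma exists_isCoupling_lintegral_lt {c : X → X → ℝ} {ν μ : Measure X} {b : ℝ≥0∞}
    (h : optCost c ν μ < b) :
    ∃ π, IsCoupling π ν μ ∧ ∫⁻ p, ENNReal.ofReal (c p.1 p.2) ∂π < b := by
  obtain ⟨π, ⟨hfst, hsnd⟩, hπ⟩ := by simpa only [optCost, iInf_lt_iff, exists_prop] using h
  exact ⟨π, ⟨hfst, hsnd⟩, hπ⟩

lemma exists_isCoupling_lintegral_le_add (c : X → X → ℝ) (ν μ : Measure X)
    [IsProbabilityMeasure ν] [IsProbabilityMeasure μ] {ε : ℝ≥0∞} (hε : ε ≠ 0) :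
    ∃ π, IsCoupling π ν μ ∧ ∫⁻ p, ENNReal.ofReal (c p.1 p.2) ∂π ≤ optCost c ν μ + ε := by
  by_cases hfin : optCost c ν μ = ∞
  · exact ⟨ν.prod μ, isCoupling_prod ν μ, by simp [hfin]⟩
  · obtain ⟨π, hπ, hlt⟩ := exists_isCoupling_lintegral_lt (ENNReal.lt_add_right hfin hε)
    exact ⟨π, hπ, hlt.le⟩

end Coupling

section Gluing

variable {X₁ X₂ : Type*} [MeasurableSpace X₁] [MeasurableSpace X₂]

/-- Knothe-type gluing: draw `(x₁, y₁)` from `π`, then `(x₂, y₂)` from `L x₁`, and record the pair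
`((x₁, x₂), (y₁, y₂))`. -/
noncomputable def glue (π : Measure (X₁ × X₁)) (L : Kernel X₁ (X₂ × X₂)) :
    Measure ((X₁ × X₂) × (X₁ × X₂)) :=
  (π ⊗ₘ L.comap Prod.fst measurable_fst).map
    fun p => ((p.1.1, p.2.1), (p.1.2, p.2.2))

variable {π : Measure (X₁ × X₁)} [SFinite π] {L : Kernel X₁ (X₂ × X₂)}

lemma isCoupling_glue [IsSFiniteKernel L] {ν₁ μ₁ : Measure X₁} {μ₂ : Measure X₂} [SFinite μ₂]
    {κ : Kernel X₁ X₂} [IsSFiniteKernel κ] (hπ : IsCoupling π ν₁ μ₁)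
    (hL : ∀ x, IsCoupling (L x) (κ x) μ₂) : IsCoupling (glue π L) (ν₁ ⊗ₘ κ) (μ₁.prod μ₂) where
  map_fst := by
    rw [glue, Measure.map_map measurable_fst (by fun_prop), ← hπ.map_fst]
    exact map_prodMap_compProd π _ measurable_fst measurable_fst κ fun p => (hL p.1).map_fst
  map_snd := by
    rw [glue, Measure.map_map measurable_snd (by fun_prop), ← hπ.map_snd,
      ← Measure.compProd_const]
    exact map_prodMap_compProd π _ measurable_snd measurable_snd (Kernel.const X₁ μ₂)
      fun p => (hL p.1).map_snd

lemma lintegral_glue [IsMarkovKernel L] {f : X₁ × X₁ → ℝ≥0∞} {g : X₂ × X₂ → ℝ≥0∞}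
    (hf : Measurable f) (hg : Measurable g) :
    ∫⁻ p, f (p.1.1, p.2.1) + g (p.1.2, p.2.2) ∂glue π L =
      ∫⁻ p, f p ∂π + ∫⁻ x, ∫⁻ r, g r ∂L x ∂π.map Prod.fst := by
  rw [glue, lintegral_map (by fun_prop) (by fun_prop)]
  calc ∫⁻ p, f p.1 + g p.2 ∂(π ⊗ₘ L.comap Prod.fst measurable_fst)
      = ∫⁻ p, (f p + ∫⁻ r, g r ∂L p.1) ∂π := by
        rw [Measure.lintegral_compProd (by fun_prop)]
        refine lintegral_congr fun p => ?_
        simp [lintegral_add_left measurable_const]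
    _ = _ := by
        rw [lintegral_add_left hf, lintegral_map hg.lintegral_kernel measurable_fst]

end Gluing

section GluingCost

variable {X₁ X₂ ι : Type*} [MeasurableSpace X₁] [MeasurableSpace X₂] [MeasurableSpace ι]

-- Any family of measures indexed by a countable type is a kernel: no measurable selection needed.
lemma exists_kernel_isCoupling_lintegral_le_add [Countable ι] [MeasurableSingletonClass ι]
    (c : X₂ → X₂ → ℝ) (κ : Kernel ι X₂) [IsMarkovKernel κ] (μ : Measure X₂)
    [IsProbabilityMeasure μ] {ε : ℝ≥0∞} (hε : ε ≠ 0) :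
    ∃ L : Kernel ι (X₂ × X₂), IsMarkovKernel L ∧ ∀ i, IsCoupling (L i) (κ i) μ ∧
      ∫⁻ p, ENNReal.ofReal (c p.1 p.2) ∂L i ≤ optCost c (κ i) μ + ε := by
  choose L hL using fun i => exists_isCoupling_lintegral_le_add c (κ i) μ hε
  exact ⟨Kernel.ofFunOfCountable L, ⟨fun i => (hL i).1.isProbabilityMeasure⟩, hL⟩

lemma optCost_compProd_comap_le [Countable ι] [MeasurableSingletonClass ι]
    {c₁ : X₁ → X₁ → ℝ} {c₂ : X₂ → X₂ → ℝ} (hc₁ : Measurable fun p : X₁ × X₁ => c₁ p.1 p.2)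
    (hc₂ : Measurable fun p : X₂ × X₂ => c₂ p.1 p.2) (ν₁ μ₁ : Measure X₁)
    [IsProbabilityMeasure ν₁] [IsProbabilityMeasure μ₁] (μ₂ : Measure X₂)
    [IsProbabilityMeasure μ₂] (κ : Kernel ι X₂) [IsMarkovKernel κ] {q : X₁ → ι}
    (hq : Measurable q) :
    optCost (fun x y => c₁ x.1 y.1 + c₂ x.2 y.2) (ν₁ ⊗ₘ κ.comap q hq) (μ₁.prod μ₂) ≤
      optCost c₁ ν₁ μ₁ + ∫⁻ i, optCost c₂ (κ i) μ₂ ∂ν₁.map q := by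
  refine ENNReal.le_of_forall_pos_le_add fun ε hε _ => ?_
  have hε₂ : (ε / 2 : ℝ≥0∞) ≠ 0 := by simpa using hε.ne'
  have := Measure.isProbabilityMeasure_map (μ := ν₁) hq.aemeasurable
  obtain ⟨π, hπ, hπ_le⟩ := exists_isCoupling_lintegral_le_add c₁ ν₁ μ₁ hε₂
  obtain ⟨L, _, hL⟩ := exists_kernel_isCoupling_lintegral_le_add c₂ κ μ₂ hε₂
  have := hπ.isProbabilityMeasure
  calc optCost (fun x y => c₁ x.1 y.1 + c₂ x.2 y.2) (ν₁ ⊗ₘ κ.comap q hq) (μ₁.prod μ₂)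
      ≤ ∫⁻ p, ENNReal.ofReal (c₁ p.1.1 p.2.1 + c₂ p.1.2 p.2.2) ∂glue π (L.comap q hq) :=
        optCost_le_lintegral (isCoupling_glue hπ fun x => (hL (q x)).1)
    _ ≤ ∫⁻ p, ENNReal.ofReal (c₁ p.1.1 p.2.1) + ENNReal.ofReal (c₂ p.1.2 p.2.2)
          ∂glue π (L.comap q hq) := lintegral_mono fun p => ENNReal.ofReal_add_le
    _ = ∫⁻ p, ENNReal.ofReal (c₁ p.1 p.2) ∂π +
          ∫⁻ i, ∫⁻ r, ENNReal.ofReal (c₂ r.1 r.2) ∂L i ∂ν₁.map q := by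
        rw [lintegral_glue hc₁.ennreal_ofReal hc₂.ennreal_ofReal, hπ.map_fst,
          lintegral_map hc₂.ennreal_ofReal.lintegral_kernel hq]
        rfl
    _ ≤ (optCost c₁ ν₁ μ₁ + ε / 2) + ∫⁻ i, optCost c₂ (κ i) μ₂ + ε / 2 ∂ν₁.map q :=
        add_le_add hπ_le (lintegral_mono fun i => (hL i).2)
    _ = optCost c₁ ν₁ μ₁ + ∫⁻ i, optCost c₂ (κ i) μ₂ ∂ν₁.map q + ε := by
        rw [lintegral_add_right _ measurable_const, lintegral_const, measure_univ, mul_one,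
          add_add_add_comm, ENNReal.add_halves]

end GluingCost

section WeakConvergence

lemma lintegral_ofReal_le_liminf {Ω : Type*} [MeasurableSpace Ω] [TopologicalSpace Ω]
    [OpensMeasurableSpace Ω] [HasOuterApproxClosed Ω] {P : ProbabilityMeasure Ω}
    {Ps : ℕ → ProbabilityMeasure Ω} (hP : Tendsto Ps atTop (𝓝 P)) {f : Ω → ℝ}
    (hf : LowerSemicontinuous f) (hf_nonneg : 0 ≤ f) :
    ∫⁻ x, ENNReal.ofReal (f x) ∂P ≤ liminf (fun n => ∫⁻ x, ENNReal.ofReal (f x) ∂Ps n) atTop := by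
  simp_rw [lintegral_eq_lintegral_meas_lt _ (.of_forall hf_nonneg) hf.measurable.aemeasurable]
  calc ∫⁻ t in Set.Ioi 0, (P : Measure Ω) {x | t < f x}
      ≤ ∫⁻ t in Set.Ioi 0, liminf (fun n => (Ps n : Measure Ω) {x | t < f x}) atTop :=
        lintegral_mono fun t =>
          ProbabilityMeasure.le_liminf_measure_open_of_tendsto hP (hf.isOpen_preimage t)
    _ ≤ _ := lintegral_liminf_le fun n =>
        Antitone.measurable fun s t hst => measure_mono fun x hx => hst.trans_lt hx

variable {X : Type*} [TopologicalSpace X] [PolishSpace X] [MeasurableSpace X] [BorelSpace X]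

lemma isTightMeasureSet_range_of_tendsto {ν : ℕ → ProbabilityMeasure X}
    {ν₀ : ProbabilityMeasure X} (hν : Tendsto ν atTop (𝓝 ν₀)) :
    IsTightMeasureSet (Set.range fun n => (ν n : Measure X)) := by
  let := TopologicalSpace.upgradeIsCompletelyMetrizable X
  have hcompact : IsCompact (closure (Set.range ν)) :=
    hν.isCompact_insert_range.closure_of_subset (Set.subset_insert _ _)
  refine (isTightMeasureSet_of_isCompact_closure hcompact).subset ?_
  rintro _ ⟨n, rfl⟩
  exact ⟨ν n, ⟨n, rfl⟩, rfl⟩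

variable {Y : Type*} [TopologicalSpace Y] [PolishSpace Y] [MeasurableSpace Y] [BorelSpace Y]

lemma IsCoupling.of_tendsto {π : ℕ → ProbabilityMeasure (X × Y)} {ν : ℕ → ProbabilityMeasure X}
    {μ : ℕ → ProbabilityMeasure Y} {π₀ : ProbabilityMeasure (X × Y)} {ν₀ : ProbabilityMeasure X}
    {μ₀ : ProbabilityMeasure Y} (hcoup : ∀ n, IsCoupling (π n : Measure (X × Y)) (ν n) (μ n))
    (hπ : Tendsto π atTop (𝓝 π₀)) (hν : Tendsto ν atTop (𝓝 ν₀)) (hμ : Tendsto μ atTop (𝓝 μ₀)) :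
    IsCoupling (π₀ : Measure (X × Y)) ν₀ μ₀ where
  map_fst := by
    have hlim := ProbabilityMeasure.tendsto_map_of_tendsto_of_continuous π π₀ hπ continuous_fst
    have hfst n : (π n).map continuous_fst.measurable.aemeasurable = ν n :=
      Subtype.ext (hcoup n).map_fst
    simp only [hfst] at hlim
    have heq := tendsto_nhds_unique hlim hν
    exact congrArg (fun m : ProbabilityMeasure X => (m : Measure X)) heq
  map_snd := by
    have hlim := ProbabilityMeasure.tendsto_map_of_tendsto_of_continuous π π₀ hπ continuous_snd
    have hsnd n : (π n).map continuous_snd.measurable.aemeasurable = μ n :=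
      Subtype.ext (hcoup n).map_snd
    simp only [hsnd] at hlim
    have heq := tendsto_nhds_unique hlim hμ
    exact congrArg (fun m : ProbabilityMeasure Y => (m : Measure Y)) heq

lemma exists_tendsto_subseq_isCoupling {π : ℕ → ProbabilityMeasure (X × Y)}
    {ν : ℕ → ProbabilityMeasure X} {μ : ℕ → ProbabilityMeasure Y} {ν₀ : ProbabilityMeasure X}
    {μ₀ : ProbabilityMeasure Y} (hcoup : ∀ n, IsCoupling (π n : Measure (X × Y)) (ν n) (μ n))
    (hν : Tendsto ν atTop (𝓝 ν₀)) (hμ : Tendsto μ atTop (𝓝 μ₀)) :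
    ∃ (π₀ : ProbabilityMeasure (X × Y)) (φ : ℕ → ℕ), StrictMono φ ∧
      Tendsto (π ∘ φ) atTop (𝓝 π₀) ∧ IsCoupling (π₀ : Measure (X × Y)) ν₀ μ₀ := by
  have htight : IsTightMeasureSet
      {((m : ProbabilityMeasure (X × Y)) : Measure (X × Y)) | m ∈ Set.range π} := by
    refine .prodMk ((isTightMeasureSet_range_of_tendsto hν).subset ?_)
      ((isTightMeasureSet_range_of_tendsto hμ).subset ?_)
    · rintro _ ⟨_, ⟨_, ⟨n, rfl⟩, rfl⟩, rfl⟩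
      exact ⟨n, (hcoup n).map_fst.symm⟩
    · rintro _ ⟨_, ⟨_, ⟨n, rfl⟩, rfl⟩, rfl⟩
      exact ⟨n, (hcoup n).map_snd.symm⟩
  obtain ⟨π₀, -, φ, hφ, hlim⟩ := (isCompact_closure_of_isTightMeasureSet htight).tendsto_subseq
    (x := π) fun n => subset_closure ⟨n, rfl⟩
  exact ⟨π₀, φ, hφ, hlim, .of_tendsto (fun n => hcoup (φ n)) hlim
    (hν.comp hφ.tendsto_atTop) (hμ.comp hφ.tendsto_atTop)⟩

lemma lowerSemicontinuous_optCost {c : X → X → ℝ} (hc_nonneg : ∀ x y, 0 ≤ c x y)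
    (hc : LowerSemicontinuous fun p : X × X => c p.1 p.2) :
    LowerSemicontinuous fun p : ProbabilityMeasure X × ProbabilityMeasure X =>
      optCost c (p.1 : Measure X) p.2 := by
  intro p₀ M hM
  by_contra hfreq
  obtain ⟨M', hMM', hM'⟩ := exists_between hM
  obtain ⟨p, hp, hcost⟩ := Filter.exists_seq_forall_of_frequently (not_eventually.1 hfreq)
  choose π hcoup hlt using fun n =>
    exists_isCoupling_lintegral_lt ((not_lt.1 (hcost n)).trans_lt hMM')
  obtain ⟨π₀, φ, -, hlim, hcoup₀⟩ :=
    exists_tendsto_subseq_isCoupling (π := fun n => ⟨π n, (hcoup n).isProbabilityMeasure⟩)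
      hcoup hp.fst_nhds hp.snd_nhds
  have hπ₀ : ∫⁻ x : X × X, ENNReal.ofReal (c x.1 x.2) ∂π₀ ≤ M' :=
    calc ∫⁻ x : X × X, ENNReal.ofReal (c x.1 x.2) ∂π₀
        ≤ liminf (fun n => ∫⁻ x : X × X, ENNReal.ofReal (c x.1 x.2) ∂π (φ n)) atTop :=
          lintegral_ofReal_le_liminf hlim hc fun x => hc_nonneg x.1 x.2
      _ ≤ liminf (fun _ : ℕ => M') atTop := liminf_le_liminf (.of_forall fun n => (hlt (φ n)).le)
      _ = M' := liminf_const M'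
  exact hM'.not_ge ((optCost_le_lintegral hcoup₀).trans hπ₀)

end WeakConvergence

section Discretization

lemma exists_measurable_nat_dist_lt {X : Type*} [PseudoMetricSpace X] [Nonempty X]
    [TopologicalSpace.SeparableSpace X] [MeasurableSpace X] [OpensMeasurableSpace X] {ε : ℝ}
    (hε : 0 < ε) :
    ∃ (q : X → ℕ) (e : ℕ → X), Measurable q ∧ ∀ x, dist x (e (q x)) < ε := by
  classical
  have hex (x : X) : ∃ n, dist x (TopologicalSpace.denseSeq X n) < ε :=
    (TopologicalSpace.denseRange_denseSeq X).exists_dist_lt x hε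
  refine ⟨fun x => Nat.find (hex x), TopologicalSpace.denseSeq X, measurable_find hex fun n => ?_,
    fun x => Nat.find_spec (hex x)⟩
  exact measurableSet_lt (by fun_prop) measurable_const

lemma abs_integral_sub_integral_map_le {Z : Type*} [PseudoMetricSpace Z] [MeasurableSpace Z]
    [OpensMeasurableSpace Z] (m : Measure Z) [IsProbabilityMeasure m] {F : Z →ᵇ ℝ} {L : ℝ≥0}
    (hF : LipschitzWith L F) {r : Z → Z} (hr : Measurable r) {ε : ℝ}
    (hdist : ∀ z, dist z (r z) ≤ ε) : |∫ z, F z ∂m - ∫ z, F z ∂m.map r| ≤ L * ε := by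
  have := Measure.isProbabilityMeasure_map (μ := m) hr.aemeasurable
  have hint : Integrable (fun z => F (r z)) m := (F.integrable (m.map r)).comp_measurable hr
  rw [integral_map hr.aemeasurable F.continuous.measurable.aestronglyMeasurable,
    ← integral_sub (F.integrable m) hint, ← Real.norm_eq_abs]
  calc ‖∫ z, F z - F (r z) ∂m‖ ≤ L * ε * m.real Set.univ := by
        refine norm_integral_le_of_norm_le_const (.of_forall fun z => ?_)
        exact (dist_eq_norm (F z) (F (r z))).symm.trans_le (hF.dist_le_mul_of_le (hdist z))
    _ = L * ε := by simp

lemma tendsto_of_map_eq_map_of_dist_le {Z : Type*} [PseudoMetricSpace Z] [MeasurableSpace Z]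
    [OpensMeasurableSpace Z] {ρ : ℕ → ProbabilityMeasure Z} {ν : ProbabilityMeasure Z}
    {r : ℕ → Z → Z} {ε : ℕ → ℝ} (hr : ∀ n, Measurable (r n)) (hε : Tendsto ε atTop (𝓝 0))
    (hdist : ∀ n z, dist z (r n z) ≤ ε n)
    (hmap : ∀ n, (ρ n : Measure Z).map (r n) = (ν : Measure Z).map (r n)) :
    Tendsto ρ atTop (𝓝 ν) := by
  refine tendsto_iff_forall_lipschitz_integral_tendsto.2 fun F ⟨C, hC⟩ ⟨L, hL⟩ => ?_
  let G : Z →ᵇ ℝ := .mkOfBound ⟨F, hL.continuous⟩ C hC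
  have hle n : dist (∫ z, F z ∂ρ n) (∫ z, F z ∂ν) ≤ L * ε n + L * ε n := by
    have hρ := abs_integral_sub_integral_map_le (F := G) (ρ n : Measure Z) hL (hr n) (hdist n)
    have hν := abs_integral_sub_integral_map_le (F := G) (ν : Measure Z) hL (hr n) (hdist n)
    rw [hmap n] at hρ
    rw [abs_sub_comm] at hν
    exact (abs_sub_le _ _ _).trans (add_le_add hρ hν)
  have hlim : Tendsto (fun n => L * ε n + L * ε n) atTop (𝓝 0) := by
    simpa using (hε.const_mul (L : ℝ)).add (hε.const_mul (L : ℝ))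
  exact tendsto_iff_dist_tendsto_zero.2 (squeeze_zero (fun _ => dist_nonneg) hle hlim)

variable {X Y ι : Type*} [MeasurableSpace X] [MeasurableSpace Y] [StandardBorelSpace Y]
  [Nonempty Y] [MeasurableSpace ι]

/-- The conditional law under `ν` of the second coordinate given the cell `q x = i` of the
partition of `X` induced by `q`. -/
noncomputable def cellKernel (ν : Measure (X × Y)) [IsFiniteMeasure ν] (q : X → ι) :
    Kernel ι Y :=
  (ν.map (Prod.map q id)).condKernel

instance (ν : Measure (X × Y)) [IsFiniteMeasure ν] (q : X → ι) : IsMarkovKernel (cellKernel ν q) :=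
  inferInstanceAs (IsMarkovKernel (ν.map (Prod.map q id)).condKernel)

/-- The measure with first marginal `ν.fst` whose conditional law given `x` is that of `ν` given
the cell of `x`; it approximates `ν` when the cells `q x = i` are small. -/
noncomputable def cellAverage (ν : Measure (X × Y)) [IsFiniteMeasure ν] {q : X → ι}
    (hq : Measurable q) : Measure (X × Y) :=
  ν.fst ⊗ₘ (cellKernel ν q).comap q hq

variable (ν : Measure (X × Y)) {q : X → ι}

instance [IsProbabilityMeasure ν] (hq : Measurable q) : IsProbabilityMeasure (cellAverage ν hq) :=
  inferInstanceAs (IsProbabilityMeasure (ν.fst ⊗ₘ (cellKernel ν q).comap q hq))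

lemma map_fst_compProd_cellKernel [IsFiniteMeasure ν] (hq : Measurable q) :
    ν.fst.map q ⊗ₘ cellKernel ν q = ν.map (Prod.map q id) := by
  have hfst : ν.fst.map q = (ν.map (Prod.map q id)).fst := by
    rw [Measure.fst, Measure.fst, Measure.map_map hq measurable_fst,
      Measure.map_map measurable_fst (hq.prodMap measurable_id)]
    rfl
  rw [hfst]
  exact (ν.map (Prod.map q id)).disintegrate (ν.map (Prod.map q id)).condKernel

lemma map_cellAverage [IsFiniteMeasure ν] (hq : Measurable q) :
    (cellAverage ν hq).map (Prod.map q id) = ν.map (Prod.map q id) := by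
  rw [cellAverage, map_prodMap_compProd ν.fst _ hq measurable_id (cellKernel ν q)
    fun x => Measure.map_id, map_fst_compProd_cellKernel ν hq]

lemma klDiv_fst_add_lintegral_klDiv_cellKernel_le [IsFiniteMeasure ν] (hq : Measurable q)
    (μ₁ : Measure X) [IsFiniteMeasure μ₁] (μ₂ : Measure Y) [IsProbabilityMeasure μ₂]
    [MeasurableSpace.CountableOrCountablyGenerated ι Y] :
    klDiv ν.fst μ₁ + ∫⁻ i, klDiv (cellKernel ν q i) μ₂ ∂ν.fst.map q ≤ klDiv ν (μ₁.prod μ₂) := by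
  rw [klDiv_prod_eq_add]
  gcongr
  calc ∫⁻ i, klDiv (cellKernel ν q i) μ₂ ∂ν.fst.map q
      = klDiv (ν.map (Prod.map q id)) ((ν.fst.prod μ₂).map (Prod.map q id)) := by
        rw [← map_fst_compProd_cellKernel ν hq, ← Measure.map_prod_map _ _ hq measurable_id,
          Measure.map_id, ← Measure.compProd_const]
        exact lintegral_klDiv_kernel (ν.fst.map q) (cellKernel ν q) (Kernel.const ι μ₂)
    _ ≤ klDiv ν (ν.fst.prod μ₂) := klDiv_map_le _ _ (hq.prodMap measurable_id)

end Discretization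

section CellApproximation

variable {X Y : Type*} [TopologicalSpace X] [PolishSpace X] [MeasurableSpace X] [BorelSpace X]
  [TopologicalSpace Y] [PolishSpace Y] [MeasurableSpace Y] [BorelSpace Y] [Nonempty Y]

lemma exists_tendsto_cellAverage (ν : ProbabilityMeasure (X × Y)) :
    ∃ (q : ℕ → X → ℕ) (hq : ∀ n, Measurable (q n)),
      Tendsto (β := ProbabilityMeasure (X × Y))
        (fun n => ⟨cellAverage ν (hq n), inferInstance⟩) atTop (𝓝 ν) := by
  let := TopologicalSpace.upgradeIsCompletelyMetrizable X
  let := TopologicalSpace.upgradeIsCompletelyMetrizable Y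
  have : Nonempty X := (ν : Measure (X × Y)).nonempty_of_neZero.map Prod.fst
  choose q e hq hdist using fun n : ℕ =>
    exists_measurable_nat_dist_lt (X := X) (Nat.one_div_pos_of_nat (α := ℝ) (n := n))
  have he n : Measurable (Prod.map (e n) id : ℕ × Y → X × Y) :=
    measurable_from_nat.prodMap measurable_id
  have hqid n : Measurable (Prod.map (q n) id : X × Y → ℕ × Y) := (hq n).prodMap measurable_id
  refine ⟨q, hq, tendsto_of_map_eq_map_of_dist_le (fun n => (he n).comp (hqid n))
    tendsto_one_div_add_atTop_nhds_zero_nat (fun n z => ?_) fun n => ?_⟩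
  · simpa [Prod.dist_eq] using (hdist n z.1).le
  · rw [← Measure.map_map (he n) (hqid n), ← Measure.map_map (he n) (hqid n)]
    exact congrArg _ (map_cellAverage (ν : Measure (X × Y)) (hq n))

lemma exists_lt_optCost_cellAverage {c : X × Y → X × Y → ℝ} (hc_nonneg : ∀ x y, 0 ≤ c x y)
    (hc : LowerSemicontinuous fun p : (X × Y) × (X × Y) => c p.1 p.2) (ν μ : Measure (X × Y))
    [IsProbabilityMeasure ν] [IsProbabilityMeasure μ] {M : ℝ≥0∞} (hM : M < optCost c ν μ) :
    ∃ (q : X → ℕ) (hq : Measurable q), M < optCost c (cellAverage ν hq) μ := by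
  let ν' : ProbabilityMeasure (X × Y) := ⟨ν, inferInstance⟩
  let μ' : ProbabilityMeasure (X × Y) := ⟨μ, inferInstance⟩
  obtain ⟨q, hq, hlim⟩ := exists_tendsto_cellAverage ν'
  have hlsc : ∀ᶠ p in 𝓝 (ν', μ'), M < optCost c (p.1 : Measure (X × Y)) p.2 :=
    lowerSemicontinuous_optCost hc_nonneg hc (ν', μ') M hM
  obtain ⟨n, hn⟩ := ((hlim.prodMk_nhds tendsto_const_nhds).eventually hlsc).exists
  exact ⟨q n, hq n, hn⟩

variable {c₁ : X → X → ℝ} {c₂ : Y → Y → ℝ}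

lemma exists_lt_optCost_fst_add_lintegral_optCost_cellKernel
    (hc₁_nonneg : ∀ x y, 0 ≤ c₁ x y) (hc₂_nonneg : ∀ x y, 0 ≤ c₂ x y)
    (hc₁ : LowerSemicontinuous fun p : X × X => c₁ p.1 p.2)
    (hc₂ : LowerSemicontinuous fun p : Y × Y => c₂ p.1 p.2)
    (ν : Measure (X × Y)) [IsProbabilityMeasure ν] (μ₁ : Measure X) [IsProbabilityMeasure μ₁]
    (μ₂ : Measure Y) [IsProbabilityMeasure μ₂] {M : ℝ≥0∞}
    (hM : M < optCost (fun x y => c₁ x.1 y.1 + c₂ x.2 y.2) ν (μ₁.prod μ₂)) :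
    ∃ q : X → ℕ, Measurable q ∧
      M < optCost c₁ ν.fst μ₁ + ∫⁻ i, optCost c₂ (cellKernel ν q i) μ₂ ∂ν.fst.map q := by
  have hc : LowerSemicontinuous fun p : (X × Y) × (X × Y) => c₁ p.1.1 p.2.1 + c₂ p.1.2 p.2.2 :=
    (hc₁.comp (g := fun p : (X × Y) × (X × Y) => (p.1.1, p.2.1)) (by fun_prop)).add
      (hc₂.comp (g := fun p : (X × Y) × (X × Y) => (p.1.2, p.2.2)) (by fun_prop))
  obtain ⟨q, hq, hlt⟩ := exists_lt_optCost_cellAverage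
    (fun x y => add_nonneg (hc₁_nonneg x.1 y.1) (hc₂_nonneg x.2 y.2)) hc ν (μ₁.prod μ₂) hM
  exact ⟨q, hq, hlt.trans_le
    (optCost_compProd_comap_le hc₁.measurable hc₂.measurable ν.fst μ₁ μ₂ _ hq)⟩

end CellApproximation

/-- Tensorization of transport-entropy inequalities: if `μᵢ` satisfies
`αᵢ(𝒯_{cᵢ}) ≤ H` (with `αᵢ` convex increasing, `αᵢ(0) = 0`), then `μ₁ ⊗ μ₂`
satisfies `(α₁ □ α₂)(𝒯_{c₁ ⊕ c₂}) ≤ H`. -/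
theorem transport_entropy_tensorization
    {X₁ : Type*} [TopologicalSpace X₁] [PolishSpace X₁] [MeasurableSpace X₁] [BorelSpace X₁]
    {X₂ : Type*} [TopologicalSpace X₂] [PolishSpace X₂] [MeasurableSpace X₂] [BorelSpace X₂]
    (c₁ : X₁ → X₁ → ℝ) (c₂ : X₂ → X₂ → ℝ)
    (hc₁_nonneg : ∀ x y, 0 ≤ c₁ x y) (hc₂_nonneg : ∀ x y, 0 ≤ c₂ x y)
    (hc₁_lsc : LowerSemicontinuous fun p : X₁ × X₁ => c₁ p.1 p.2)
    (hc₂_lsc : LowerSemicontinuous fun p : X₂ × X₂ => c₂ p.1 p.2)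
    (α₁ α₂ : ℝ → ℝ)
    (hα₁_cvx : ConvexOn ℝ (Set.Ici 0) α₁) (hα₁_mono : MonotoneOn α₁ (Set.Ici 0))
    (hα₁_zero : α₁ 0 = 0)
    (hα₂_cvx : ConvexOn ℝ (Set.Ici 0) α₂) (hα₂_mono : MonotoneOn α₂ (Set.Ici 0))
    (hα₂_zero : α₂ 0 = 0)
    (μ₁ : Measure X₁) [IsProbabilityMeasure μ₁] (μ₂ : Measure X₂) [IsProbabilityMeasure μ₂]
    (h₁ : ∀ ν₁ : Measure X₁, IsProbabilityMeasure ν₁ →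
      extRealFun α₁ (optCost c₁ ν₁ μ₁) ≤ relEntropy ν₁ μ₁)
    (h₂ : ∀ ν₂ : Measure X₂, IsProbabilityMeasure ν₂ →
      extRealFun α₂ (optCost c₂ ν₂ μ₂) ≤ relEntropy ν₂ μ₂)
    (ν : Measure (X₁ × X₂)) [IsProbabilityMeasure ν] :
    extRealFun (infConv α₁ α₂)
        (optCost (fun p q => c₁ p.1 q.1 + c₂ p.2 q.2) ν (μ₁.prod μ₂)) ≤
      relEntropy ν (μ₁.prod μ₂) := by
  have hα₁_nonneg t (ht : 0 ≤ t) : 0 ≤ α₁ t := hα₁_zero ▸ hα₁_mono Set.self_mem_Ici ht ht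
  have hα₂_nonneg t (ht : 0 ≤ t) : 0 ≤ α₂ t := hα₂_zero ▸ hα₂_mono Set.self_mem_Ici ht ht
  have hinfConv_zero : infConv α₁ α₂ 0 ≤ 0 := by
    simpa [hα₁_zero, hα₂_zero] using infConv_le_add hα₁_nonneg hα₂_nonneg le_rfl le_rfl
  have : Nonempty X₂ := ν.nonempty_of_neZero.map Prod.snd
  refine extRealFun_le_of_forall_lt (convexOn_infConv hα₁_cvx hα₂_cvx hα₁_nonneg hα₂_nonneg)
    hinfConv_zero fun M hM => ?_
  obtain ⟨q, hq, hM⟩ := exists_lt_optCost_fst_add_lintegral_optCost_cellKernel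
    hc₁_nonneg hc₂_nonneg hc₁_lsc hc₂_lsc ν μ₁ μ₂ hM
  have := Measure.isProbabilityMeasure_map (μ := ν.fst) hq.aemeasurable
  calc extRealFun (infConv α₁ α₂) M
      ≤ extRealFun α₁ (optCost c₁ ν.fst μ₁) +
          extRealFun α₂ (∫⁻ i, optCost c₂ (cellKernel ν q i) μ₂ ∂ν.fst.map q) :=
        (extRealFun_mono _ hM.le).trans (extRealFun_infConv_add_le hα₁_nonneg hα₂_nonneg _ _)
    _ ≤ extRealFun α₁ (optCost c₁ ν.fst μ₁) +
          ∫⁻ i, extRealFun α₂ (optCost c₂ (cellKernel ν q i) μ₂) ∂ν.fst.map q := by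
        gcongr
        exact extRealFun_lintegral_le _ hα₂_cvx hα₂_mono _
    _ ≤ relEntropy ν.fst μ₁ + ∫⁻ i, relEntropy (cellKernel ν q i) μ₂ ∂ν.fst.map q := by
        gcongr with i
        exacts [h₁ _ inferInstance, h₂ _ inferInstance]
    _ ≤ relEntropy ν (μ₁.prod μ₂) := by
        simp only [relEntropy_eq_klDiv]
        exact klDiv_fst_add_lintegral_klDiv_cellKernel_le ν hq μ₁ μ₂
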